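/- Let Λ = KQ/I be a finite-dimensional algebra over an algebraically closed field with J² = 0, and let d be a dimension vector. For d-dimensional semisimple sequences S = (S_0, S_1) and S̃ = (S̃_0, S̃_1), the inclusion Rep S̃ ⊆ closure(Rep S) holds if and only if S_0 ⊆ S̃_0 and S*_0 ⊆ S̃*_0, where S*_0 and S̃*_0 denote the generic socles of the modules in Rep S and in Rep S̃, respectively, and ⊆ means componentwise inequality of dimension vectors of semisimple modules. In particular, the irreducible components of Rep_d(Λ) are precisely the closures of those Rep S for which the pair (S_0, S*_0) is minimal in the image of the map x ↦ (Top M_x, soc M_x) on Rep_d(Λ), ordered by componentwise inclusion. -/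

import Mathlib

open Finset

/-! # Varieties of representations of a quiver with relations: basic setup -/

/-- The Zariski topology on the affine space `ι → K`: it is generated by the basic open
sets `D(p) = {x | p(x) ≠ 0}`, where `p` ranges over multivariate polynomials. -/
def zariskiTopology (ι K : Type) [CommSemiring K] : TopologicalSpace (ι → K) :=
  TopologicalSpace.generateFrom
    {U | ∃ p : MvPolynomial ι K, U = {x | MvPolynomial.eval x p ≠ 0}}

/-- A finite quiver `Q`: vertices `Fin n`, arrows `Fin numArrows` with source and
target maps. -/
structure QuiverData where
  n : ℕ
  numArrows : ℕ
  src : Fin numArrows → Fin n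
  tgt : Fin numArrows → Fin n

namespace QuiverData

variable (Q : QuiverData) (d : Fin Q.n → ℕ) (K : Type) [Field K]

/-- Index of the coordinates of the affine space of `d`-dimensional representations:
for each arrow `a` a matrix entry index in `Fin (d (tgt a)) × Fin (d (src a))`. -/
abbrev Coords := Σ a : Fin Q.numArrows, Fin (d (Q.tgt a)) × Fin (d (Q.src a))

/-- The affine space of `d`-dimensional representations of `Q`:
a point `x` assigns to each arrow `a` a `d (tgt a) × d (src a)` matrix over `K`. -/
abbrev RepSpace := Coords Q d → K

/-- `RepSpace` carries the Zariski topology. -/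
noncomputable instance instRepTop : TopologicalSpace (RepSpace Q d K) :=
  zariskiTopology (Coords Q d) K

/-- The underlying `K`-vector space `⊕ᵢ K^{dᵢ}` of any `d`-dimensional representation. -/
abbrev Carrier := (Σ i : Fin Q.n, Fin (d i)) → K

/-- The projection onto the component of the `i`-th vertex (action of the primitive
idempotent `eᵢ`). -/
def proj (i : Fin Q.n) : Carrier Q d K →ₗ[K] Carrier Q d K where
  toFun m := fun jv => if jv.1 = i then m jv else 0
  map_add' u v := by
    funext jv; by_cases h : jv.1 = i <;> simp [h]
  map_smul' c u := by
    funext jv; by_cases h : jv.1 = i <;> simp [h]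

/-- The action of the arrow `a` on the carrier space of the representation `x`. -/
noncomputable def arrowMap (x : RepSpace Q d K) (a : Fin Q.numArrows) :
    Carrier Q d K →ₗ[K] Carrier Q d K where
  toFun m := fun jv =>
    if h : jv.1 = Q.tgt a then
      ∑ w : Fin (d (Q.src a)), x ⟨a, (Fin.cast (congrArg d h) jv.2, w)⟩ * m ⟨Q.src a, w⟩
    else 0
  map_add' u v := by
    funext jv
    by_cases h : jv.1 = Q.tgt a <;> simp [h, mul_add, Finset.sum_add_distrib]
  map_smul' c u := by
    funext jv
    by_cases h : jv.1 = Q.tgt a <;>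
      simp [h, Finset.mul_sum, mul_comm, mul_left_comm, mul_assoc]

/-- The action of a word `w = [a_k, …, a_1]` of arrows on the representation `x`
(the arrow `a_1` acts first; non-composable words act as `0`). -/
noncomputable def wordMap (x : RepSpace Q d K) (w : List (Fin Q.numArrows)) :
    Module.End K (Carrier Q d K) :=
  (w.map fun a => (arrowMap Q d K x a : Module.End K (Carrier Q d K))).prod

/-- The submodule `J^l · M_x` of the module `M_x`: the sum of the images of all words of
arrows of length `l` (for an admissible ideal, the radical acts through the arrows). -/
noncomputable def radPow (x : RepSpace Q d K) (l : ℕ) : Submodule K (Carrier Q d K) :=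
  ⨆ w : {w : List (Fin Q.numArrows) // w.length = l},
    LinearMap.range (wordMap Q d K x w.1)

/-- The socle series of `M_x`: `socPow x l = soc_l(M_x)`. -/
noncomputable def socPow (x : RepSpace Q d K) : ℕ → Submodule K (Carrier Q d K)
  | 0 => ⨅ a, LinearMap.ker (arrowMap Q d K x a)
  | (l+1) => ⨅ a, (socPow x l).comap (arrowMap Q d K x a)

/-- The dimension, at the vertex `i`, of a (vertex-graded) subspace `N`. -/
noncomputable def vdim (N : Submodule K (Carrier Q d K)) (i : Fin Q.n) : ℕ :=
  Module.finrank K (N.map (proj Q d K i))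

/-- The radical layering `S(M_x) = (M/JM, JM/J²M, …, J^L M/J^{L+1} M)` of the module `M_x`,
recorded through the dimension vectors of its semisimple layers. -/
noncomputable def radLayering (L : ℕ) (x : RepSpace Q d K) :
    Fin (L+1) → Fin Q.n → ℕ :=
  fun l i => vdim Q d K (radPow Q d K x l) i - vdim Q d K (radPow Q d K x (l+1)) i

/-- The socle layering `S*(M_x) = (soc₀M, soc₁M/soc₀M, …)` of the module `M_x`, recorded
through the dimension vectors of its semisimple layers. -/
noncomputable def socLayering (L : ℕ) (x : RepSpace Q d K) :
    Fin (L+1) → Fin Q.n → ℕ :=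
  fun l i => vdim Q d K (socPow Q d K x l) i -
    (if (l : ℕ) = 0 then 0 else vdim Q d K (socPow Q d K x ((l : ℕ) - 1)) i)

end QuiverData

/-- The dominance order on semisimple sequences (recorded as sequences of dimension
vectors): `dominates S S'` means `S ≤ S'`, i.e. `⊕_{j≤l} S_j ⊆ ⊕_{j≤l} S'_j` for all `l`. -/
def dominates {n L : ℕ} (S S' : Fin (L+1) → Fin n → ℕ) : Prop :=
  ∀ (l : Fin (L+1)) (i : Fin n),
    ∑ j ∈ Finset.univ.filter (fun j => j ≤ l), S j i ≤
      ∑ j ∈ Finset.univ.filter (fun j => j ≤ l), S' j i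

/-- A semisimple sequence has dimension vector `d` if its layers' dimension vectors sum
to `d`. -/
def hasDimVec {n L : ℕ} (S : Fin (L+1) → Fin n → ℕ) (d : Fin n → ℕ) : Prop :=
  ∀ i, ∑ l, S l i = d i

namespace QuiverData

variable (Q : QuiverData) (d : Fin Q.n → ℕ) (K : Type) [Field K]

/-- Evaluation of a formal noncommutative polynomial in the vertices (`Sum.inl`) and
arrows (`Sum.inr`) of `Q` on the representation `x`; an element of the path algebra `KQ`
is represented by such a polynomial. -/
noncomputable def evalRel (x : RepSpace Q d K) :
    FreeAlgebra K (Fin Q.n ⊕ Fin Q.numArrows) →ₐ[K] Module.End K (Carrier Q d K) :=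
  FreeAlgebra.lift K
    (Sum.elim (fun i => (proj Q d K i : Module.End K (Carrier Q d K)))
      (fun a => (arrowMap Q d K x a : Module.End K (Carrier Q d K))))

/-- The affine variety `Rep_d(Λ)` for `Λ = KQ/I`, where the ideal `I` is generated by the
set `R` of relations: the set of points of `RepSpace` annihilating every relation. -/
def RepVar (R : Set (FreeAlgebra K (Fin Q.n ⊕ Fin Q.numArrows))) :
    Set (RepSpace Q d K) :=
  {x | ∀ r ∈ R, evalRel Q d K x r = 0}

/-- The affine variety `Rep_d(Λ)` for the truncated path algebra
`Λ = KQ/⟨all paths of length L+1⟩`. -/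
def TruncRepVar (L : ℕ) : Set (RepSpace Q d K) :=
  {x | ∀ w : List (Fin Q.numArrows), w.length = L + 1 → wordMap Q d K x w = 0}

/-- A submodule of `M_x`, i.e. a subspace stable under the arrows and the vertex
idempotents. -/
def Stable (x : RepSpace Q d K) (N : Submodule K (Carrier Q d K)) : Prop :=
  (∀ a, N.map (arrowMap Q d K x a) ≤ N) ∧ ∀ i, N.map (proj Q d K i) ≤ N

/-- A submodule `N` of `M_x` is indecomposable (as a module). -/
def IndecompSub (x : RepSpace Q d K) (N : Submodule K (Carrier Q d K)) : Prop :=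
  N ≠ ⊥ ∧ ∀ N₁ N₂ : Submodule K (Carrier Q d K),
    Stable Q d K x N₁ → Stable Q d K x N₂ → N₁ ≤ N → N₂ ≤ N →
    N₁ ⊔ N₂ = N → N₁ ⊓ N₂ = ⊥ → N₁ = ⊥ ∨ N₂ = ⊥

/-- The module `M_x` is indecomposable. -/
def IndecompRep (x : RepSpace Q d K) : Prop :=
  IndecompSub Q d K x ⊤

/-- The module `M_x` is uniserial: its submodules form a chain. -/
def UniserialRep (x : RepSpace Q d K) : Prop :=
  ∀ N₁ N₂ : Submodule K (Carrier Q d K),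
    Stable Q d K x N₁ → Stable Q d K x N₂ → N₁ ≤ N₂ ∨ N₂ ≤ N₁

/-- `M_x` decomposes as a direct sum of `s` indecomposable submodules whose dimension
vectors are `D 0, …, D (s-1)`. -/
def DecompWith (x : RepSpace Q d K) (s : ℕ) (D : Fin s → Fin Q.n → ℕ) : Prop :=
  ∃ N : Fin s → Submodule K (Carrier Q d K),
    (∀ r, Stable Q d K x (N r)) ∧
    (∀ r, Disjoint (N r) (⨆ t, ⨆ (_ : t ≠ r), N t)) ∧
    (⨆ r, N r) = ⊤ ∧
    (∀ r, IndecompSub Q d K x (N r)) ∧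
    ∀ r i, vdim Q d K (N r) i = D r i

/-- A homomorphism of representations `M_x → M_y` (for possibly different dimension
vectors): a linear map commuting with the arrow actions and the vertex projections. -/
def RepHom (dx dy : Fin Q.n → ℕ) (x : RepSpace Q dx K) (y : RepSpace Q dy K)
    (φ : Carrier Q dx K →ₗ[K] Carrier Q dy K) : Prop :=
  (∀ a, φ ∘ₗ arrowMap Q dx K x a = arrowMap Q dy K y a ∘ₗ φ) ∧
  ∀ i, φ ∘ₗ proj Q dx K i = proj Q dy K i ∘ₗ φ

/-- The submodule `N` of `M_x` is isomorphic, as a representation, to `M_y`. -/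
def SubrepIso (dy : Fin Q.n → ℕ) (x : RepSpace Q d K)
    (N : Submodule K (Carrier Q d K)) (y : RepSpace Q dy K) : Prop :=
  ∃ φ : Carrier Q d K →ₗ[K] Carrier Q dy K,
    N ⊓ LinearMap.ker φ = ⊥ ∧ N.map φ = ⊤ ∧
    (∀ a, ∀ m ∈ N, φ (arrowMap Q d K x a m) = arrowMap Q dy K y a (φ m)) ∧
    (∀ i, ∀ m ∈ N, φ (proj Q d K i m) = proj Q dy K i (φ m))

/-- The representations `M_x` and `M_y` are isomorphic; the isomorphism classes are
exactly the orbits of the `GL(d)`-action. -/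
def IsoRep (x y : RepSpace Q d K) : Prop :=
  ∃ φ : Carrier Q d K ≃ₗ[K] Carrier Q d K,
    (∀ a m, φ (arrowMap Q d K x a m) = arrowMap Q d K y a (φ m)) ∧
    ∀ i m, φ (proj Q d K i m) = proj Q d K i (φ m)

/-- The `GL(d)`-orbit of the point `x`, i.e. the set of points encoding modules
isomorphic to `M_x`. -/
def orbitSet (x : RepSpace Q d K) : Set (RepSpace Q d K) :=
  {y | IsoRep Q d K x y}

/-- Given a family `P` of varieties `Rep_dv(Λ)` (one for every dimension vector `dv`),
`Ext¹_Λ(M_x, M_y) = 0`: every extension `0 → M_y → E → M_x → 0` of `Λ`-modules splits. -/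
def Ext1Zero (P : ∀ dv : Fin Q.n → ℕ, Set (RepSpace Q dv K))
    (dx dy : Fin Q.n → ℕ) (x : RepSpace Q dx K) (y : RepSpace Q dy K) : Prop :=
  ∀ z ∈ P (fun i => dx i + dy i),
    ∀ (ι : Carrier Q dy K →ₗ[K] Carrier Q (fun i => dx i + dy i) K)
      (π : Carrier Q (fun i => dx i + dy i) K →ₗ[K] Carrier Q dx K),
      RepHom Q K dy (fun i => dx i + dy i) y z ι →
      RepHom Q K (fun i => dx i + dy i) dx z x π →
      Function.Injective ι → Function.Surjective π →
      LinearMap.ker π = LinearMap.range ι →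
      ∃ σ : Carrier Q dx K →ₗ[K] Carrier Q (fun i => dx i + dy i) K,
        RepHom Q K dx (fun i => dx i + dy i) x z σ ∧ π ∘ₗ σ = LinearMap.id

/-- The direct sum `C₁ ⊕ ⋯ ⊕ C_s` of subvarieties `C_r ⊆ Rep_{D r}(Λ)`: the set of
points `x ∈ Rep_d(Λ)` whose module decomposes as `M_x ≅ ⊕_r M^{(r)}` with `M^{(r)}`
encoded by a point of `C_r`. -/
def DirectSumSet (s : ℕ) (D : Fin s → Fin Q.n → ℕ)
    (Cs : ∀ r : Fin s, Set (RepSpace Q (D r) K)) : Set (RepSpace Q d K) :=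
  {x | ∃ N : Fin s → Submodule K (Carrier Q d K),
    (∀ r, Stable Q d K x (N r)) ∧
    (∀ r, Disjoint (N r) (⨆ t, ⨆ (_ : t ≠ r), N t)) ∧
    (⨆ r, N r) = ⊤ ∧
    ∀ r, ∃ y ∈ Cs r, SubrepIso Q d K (D r) x (N r) y}

/-- The endomorphism space `End_Λ(M_x)` of the module `M_x`. -/
def endSpace (x : RepSpace Q d K) :
    Submodule K (Carrier Q d K →ₗ[K] Carrier Q d K) where
  carrier := {φ | RepHom Q K d d x x φ}
  add_mem' := by
    intro φ ψ hφ hψ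
    exact ⟨fun a => by rw [LinearMap.add_comp, LinearMap.comp_add, hφ.1 a, hψ.1 a],
      fun i => by rw [LinearMap.add_comp, LinearMap.comp_add, hφ.2 i, hψ.2 i]⟩
  zero_mem' := by
    exact ⟨fun a => by simp, fun i => by simp⟩
  smul_mem' := by
    intro c φ hφ
    exact ⟨fun a => by rw [LinearMap.smul_comp, LinearMap.comp_smul, hφ.1 a],
      fun i => by rw [LinearMap.smul_comp, LinearMap.comp_smul, hφ.2 i]⟩

/-- A word of arrows is a (composable) path when read in function-composition order. -/
def IsPathWord (w : List (Fin Q.numArrows)) : Prop :=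
  List.Chain' (fun a b => Q.src a = Q.tgt b) w

/-- The quiver `Q` has no oriented cycles. -/
def Acyclic : Prop :=
  ∀ (a : Fin Q.numArrows) (w : List (Fin Q.numArrows)),
    IsPathWord Q (a :: w) →
      Q.tgt a ≠ Q.src ((a :: w).getLast (List.cons_ne_nil a w))

/-- A filtration `M_x = F 0 ⊇ F 1 ⊇ ⋯ ⊇ F (L+1) = 0` by submodules which is governed by
the semisimple sequence `S`: each layer `F l / F (l+1)` is semisimple, isomorphic to `S l`. -/
def Governed (L : ℕ) (x : RepSpace Q d K) (S : Fin (L+1) → Fin Q.n → ℕ)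
    (F : Fin (L+2) → Submodule K (Carrier Q d K)) : Prop :=
  F 0 = ⊤ ∧ F (Fin.last (L+1)) = ⊥ ∧
  (∀ l : Fin (L+1), F l.succ ≤ F l.castSucc) ∧
  (∀ (l : Fin (L+2)) (i : Fin Q.n), (F l).map (proj Q d K i) ≤ F l) ∧
  (∀ (l : Fin (L+1)) (a : Fin Q.numArrows),
      (F l.castSucc).map (arrowMap Q d K x a) ≤ F l.succ) ∧
  ∀ (l : Fin (L+1)) (i : Fin Q.n),
      vdim Q d K (F l.castSucc) i = S l i + vdim Q d K (F l.succ) i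

/-- `Filt S`: the set of points whose module has a filtration governed by `S`. -/
def FiltSet (L : ℕ) (S : Fin (L+1) → Fin Q.n → ℕ) : Set (RepSpace Q d K) :=
  {x | ∃ F, Governed Q d K L x S F}

/-- `Γ(M_x)`: the number of semisimple sequences which are realizable (i.e. occur as the
radical layering of a module in the variety `P`) and which govern some filtration of `M_x`. -/
noncomputable def gammaCount (L : ℕ) (P : Set (RepSpace Q d K))
    (x : RepSpace Q d K) : ℕ :=
  Set.ncard {S : Fin (L+1) → Fin Q.n → ℕ |
    (∃ y ∈ P, radLayering Q d K L y = S) ∧ ∃ F, Governed Q d K L x S F}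

/-- `Sstar` is the generic (= minimal, attained) socle layering of the modules in `W`. -/
def GenSoc (L : ℕ) (W : Set (RepSpace Q d K))
    (Sstar : Fin (L+1) → Fin Q.n → ℕ) : Prop :=
  (∀ x ∈ W, dominates Sstar (socLayering Q d K L x)) ∧
  ∃ x ∈ W, socLayering Q d K L x = Sstar

end QuiverData

namespace QuiverData

variable (Q : QuiverData)

/-- The `i`-th entry of the row vector `e·A` (over `ℤ`), where `A` is the adjacency
matrix of `Q`: the sum of `e (src a)` over all arrows `a` ending at `i`. -/
def inflowZ (e : Fin Q.n → ℤ) (i : Fin Q.n) : ℤ :=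
  ∑ a ∈ Finset.univ.filter (fun a => Q.tgt a = i), e (Q.src a)

/-- The `i`-th entry of the row vector `e·B` (over `ℤ`), where `B` is the transpose of
the adjacency matrix of `Q`. -/
def outflowZ (e : Fin Q.n → ℤ) (i : Fin Q.n) : ℤ :=
  ∑ a ∈ Finset.univ.filter (fun a => Q.src a = i), e (Q.tgt a)

/-- Partial sums `t⁽⁰⁾ + ⋯ + t⁽ˡ⁾` of the recursion
`t⁽⁰⁾ = sup{0, d − d·A}`, `t⁽ˡ⁺¹⁾ = sup{0, (d − ∑_{k≤l} t⁽ᵏ⁾) − (d − ∑_{k≤l} t⁽ᵏ⁾)·A}`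
(computed componentwise). -/
def cumLayer (dz : Fin Q.n → ℤ) : ℕ → Fin Q.n → ℤ
  | 0 => fun i => max 0 (dz i - inflowZ Q dz i)
  | (l+1) => fun i =>
      cumLayer dz l i +
        max 0 ((dz i - cumLayer dz l i) -
          inflowZ Q (fun j => dz j - cumLayer dz l j) i)

/-- The positive part `∑ᵢ eᵢ fᵢ` of the Euler form of `Q`. -/
def eulerHomPart (e f : Fin Q.n → ℕ) : ℕ := ∑ i, e i * f i

/-- The negative part `∑_{α} e_{src α} f_{tgt α}` of the Euler form of `Q`, so that
`⟨e, f⟩ = eulerHomPart e f − eulerExtPart e f`. -/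
def eulerExtPart (e f : Fin Q.n → ℕ) : ℕ :=
  ∑ a, e (Q.src a) * f (Q.tgt a)

end QuiverData

/-- The quiver with a single vertex and `r` loops. -/
def QuiverData.loopQuiver (r : ℕ) : QuiverData :=
  ⟨1, r, fun _ => 0, fun _ => 0⟩

namespace QuiverData

variable (Q : QuiverData) (d : Fin Q.n → ℕ) (K : Type) [Field K]

/-- The variety `Rep_d(Λ)` for `Λ = KQ/⟨Rels⟩`, regarded as a topological space with the
(subspace) Zariski topology. -/
abbrev GenV (Rels : Set (FreeAlgebra K (Fin Q.n ⊕ Fin Q.numArrows))) :=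
  {y : RepSpace Q d K // y ∈ RepVar Q d K Rels}

/-- The variety `Rep_d(Λ)` for the truncated path algebra
`Λ = KQ/⟨paths of length L+1⟩`, regarded as a topological space. -/
abbrev TruncV (L : ℕ) := {y : RepSpace Q d K // y ∈ TruncRepVar Q d K L}

end QuiverData

/-- The dimension vector of the socle of the module `M_x` (CONTEXT for Statement 12). -/
noncomputable def socDim (Q : QuiverData) (d : Fin Q.n → ℕ) (K : Type) [Field K]
    (x : QuiverData.RepSpace Q d K) : Fin Q.n → ℕ :=
  fun i => QuiverData.vdim Q d K (QuiverData.socPow Q d K x 0) i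

/-- The dimension vector of the top `M_x/JM_x` of the module `M_x` (for `J² = 0` this is
the 0-th entry of the radical layering). -/
noncomputable def topDim (Q : QuiverData) (d : Fin Q.n → ℕ) (K : Type) [Field K]
    (x : QuiverData.RepSpace Q d K) : Fin Q.n → ℕ :=
  fun i => QuiverData.radLayering Q d K 1 x 0 i

/-- `U0` is the generic socle (componentwise minimal socle dimension vector, attained)
of the modules in `W`. -/
noncomputable def IsGenericSocle (Q : QuiverData) (d : Fin Q.n → ℕ) (K : Type) [Field K]
    (W : Set (QuiverData.RepSpace Q d K)) (U0 : Fin Q.n → ℕ) : Prop :=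
  (∀ x ∈ W, U0 ≤ socDim Q d K x) ∧ ∃ x ∈ W, socDim Q d K x = U0

/-!
Fix a vertex-graded subspace `R`. The `x` in `Rep_d(Λ)` with `JM_x ⊆ R ⊆ soc M_x` form an affine
subspace, because modulo `J²` every relation is a linear combination of vertices and arrows.

Let `x, y` satisfy `dim JM_x ≤ dim JM_y ≤ dim soc M_x` at every vertex. Pick `R` of dimension
`dim JM_y` with `JM_x ⊆ R ⊆ soc M_x`, and move `JM_y` onto `R` by `1 + N` with `N² = 0`. The segment
from `x` to the translate of `y`, moved back along the inverses of `1 + t N`, is a polynomial curve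
in `Rep_d(Λ)` from `x` to `y` whose generic point has the top of `M_y`. For `Top M_x = Top M_y` this
makes `Rep S` irreducible; in general it puts `x` in the closure of the stratum of `y`. As top and
socle dimensions are upper semicontinuous, the closure of `Rep S` is therefore the locus where
`S_0 ⊆ Top M_x` and `S*_0 ⊆ soc M_x`, and both claims follow.
-/

section LinearAlgebra

open Module Submodule

variable {K V : Type*} [Field K] [AddCommGroup V] [Module K V]

theorem exists_notMem_and_notMem {R R' : Submodule K V} (hR : R ≠ ⊤) (hR' : R' ≠ ⊤) :
    ∃ v, v ∉ R ∧ v ∉ R' := by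
  by_contra! hcover
  have hunion : ((⊤ : Submodule K V) : Set V) ⊆ R ∪ R' :=
    fun v _ => or_iff_not_imp_left.2 (hcover v)
  exact (AddSubgroupClass.subset_union.1 hunion).elim (hR <| top_le_iff.1 ·) (hR' <| top_le_iff.1 ·)

theorem exists_isCompl_isCompl_of_finrank_eq [FiniteDimensional K V] {R R' : Submodule K V}
    (h : finrank K R = finrank K R') : ∃ C, IsCompl R C ∧ IsCompl R' C := by
  obtain ⟨n, hn⟩ := Nat.exists_eq_add_of_le (finrank_le R)
  induction n generalizing R R' with
  | zero =>
    obtain rfl : R = ⊤ := eq_top_of_finrank_eq (by omega)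
    obtain rfl : R' = ⊤ := eq_top_of_finrank_eq (by omega)
    exact ⟨⊥, isCompl_top_bot, isCompl_top_bot⟩
  | succ n ih =>
    have hR : R ≠ ⊤ := by rintro rfl; rw [finrank_top] at hn; omega
    have hR' : R' ≠ ⊤ := by rintro rfl; rw [finrank_top] at h; omega
    obtain ⟨v, hv, hv'⟩ := exists_notMem_and_notMem hR hR'
    have hrank := finrank_sup_span_singleton hv
    have hrank' := finrank_sup_span_singleton hv'
    obtain ⟨C, hC, hC'⟩ := ih (hrank.trans (by omega : _ = finrank K ↥(R' ⊔ K ∙ v)))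
      (by omega)
    exact ⟨K ∙ v ⊔ C,
      (disjoint_span_singleton_of_notMem hv).isCompl_sup_right_of_isCompl_sup_left hC,
      (disjoint_span_singleton_of_notMem hv').isCompl_sup_right_of_isCompl_sup_left hC'⟩

-- The difference `p' - p` of the projections onto `R'` and `R` along a common complement.
theorem exists_mul_self_eq_zero_map_one_add [FiniteDimensional K V] {R R' : Submodule K V}
    (h : finrank K R = finrank K R') :
    ∃ N : End K V, N * N = 0 ∧ R.map (1 + N) = R' := by
  obtain ⟨C, hC, hC'⟩ := exists_isCompl_isCompl_of_finrank_eq h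
  set p := R.projection C hC
  set p' := R'.projection C hC'
  have hp : ∀ v, p v - v ∈ C := fun v => by
    rw [← neg_sub]; exact C.neg_mem (sub_projection_mem hC v)
  have hp' : ∀ v, p' v - v ∈ C := fun v => by
    rw [← neg_sub]; exact C.neg_mem (sub_projection_mem hC' v)
  have hdiff : ∀ v, p' v - p v ∈ C := fun v => by
    simpa using C.sub_mem (hp' v) (hp v)
  refine ⟨p' - p, LinearMap.ext fun v => ?_, le_antisymm ?_ ?_⟩
  · have hker : p (p' v - p v) = 0 := (projection_apply_eq_zero_iff hC).2 (hdiff v)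
    have hker' : p' (p' v - p v) = 0 := (projection_apply_eq_zero_iff hC').2 (hdiff v)
    rw [End.mul_apply, LinearMap.sub_apply, LinearMap.sub_apply, hker, hker', sub_zero,
      LinearMap.zero_apply]
  · rintro _ ⟨v, hv, rfl⟩
    have hfix : p v = v := (projection_eq_self_iff hC v).2 hv
    have hmap : (1 + (p' - p)) v = p' v := by simp [hfix]
    exact hmap ▸ projection_apply_mem hC' v
  · intro v hv
    have hfix : p' v = v := (projection_eq_self_iff hC' v).2 hv
    have hback : p' (p v) = v := by
      rw [← sub_eq_zero, ← hfix, ← map_sub, projection_apply_eq_zero_iff, hfix]; exact hp v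
    have hidem : p (p v) = p v := (projection_eq_self_iff hC _).2 (projection_apply_mem hC v)
    exact ⟨p v, projection_apply_mem hC v, by simp [hback, hidem]⟩

theorem exists_between_finrank_eq [FiniteDimensional K V] {A B : Submodule K V} (hAB : A ≤ B)
    {k : ℕ} (hA : finrank K A ≤ k) (hB : k ≤ finrank K B) :
    ∃ R, A ≤ R ∧ R ≤ B ∧ finrank K R = k := by
  induction k, hA using Nat.le_induction with
  | base => exact ⟨A, le_rfl, hAB, rfl⟩
  | succ k _ ih =>
    obtain ⟨R, hAR, hRB, hR⟩ := ih (by omega)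
    have hlt : R < B := lt_of_le_of_ne hRB (by rintro rfl; omega)
    obtain ⟨v, hvB, hvR⟩ := SetLike.exists_of_lt hlt
    exact ⟨R ⊔ K ∙ v, hAR.trans le_sup_left, sup_le hRB (by simpa using hvB),
      by rw [finrank_sup_span_singleton hvR, hR]⟩

theorem exists_comp_comp_eq_id_of_le_finrank_range {E F : Type*} [AddCommGroup E] [Module K E]
    [AddCommGroup F] [Module K F] [FiniteDimensional K F] (T : E →ₗ[K] F) {k : ℕ}
    (h : k ≤ finrank K T.range) :
    ∃ (φ : F →ₗ[K] (Fin k → K)) (ψ : (Fin k → K) →ₗ[K] E), φ ∘ₗ T ∘ₗ ψ = LinearMap.id := by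
  obtain ⟨v, hv⟩ := exists_linearIndependent_of_le_finrank h
  choose u hu using fun j => (v j).2
  have hTu : T ∘ₗ Fintype.linearCombination K u =
      T.range.subtype ∘ₗ Fintype.linearCombination K v := by
    ext j; simp [hu]
  have hinj : LinearMap.ker (T ∘ₗ Fintype.linearCombination K u) = ⊥ := by
    rw [hTu, LinearMap.ker_comp_of_ker_eq_bot _ (ker_subtype _), LinearMap.ker_eq_bot]
    exact hv.fintypeLinearCombination_injective
  obtain ⟨φ, hφ⟩ := LinearMap.exists_leftInverse_of_injective _ hinj
  exact ⟨φ, _, hφ⟩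

theorem range_lsum {ι : Type*} [Fintype ι] [DecidableEq ι] {φ : ι → Type*}
    [∀ i, AddCommGroup (φ i)] [∀ i, Module K (φ i)] (f : ∀ i, φ i →ₗ[K] V) :
    (LinearMap.lsum K φ K f).range = ⨆ i, (f i).range := by
  refine le_antisymm ?_ (iSup_le fun i => ?_)
  · rintro _ ⟨m, rfl⟩
    rw [LinearMap.lsum_apply, LinearMap.sum_apply]
    exact sum_mem fun i _ => mem_iSup_of_mem i ⟨m i, rfl⟩
  · rintro _ ⟨v, rfl⟩
    exact ⟨Pi.single i v, LinearMap.lsum_piSingle ..⟩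

end LinearAlgebra

section Zariski

open Polynomial Topology

variable {ι K : Type} [Field K]

theorem isOpen_zariskiTopology_eval_ne_zero (p : MvPolynomial ι K) :
    IsOpen[zariskiTopology ι K] {x | MvPolynomial.eval x p ≠ 0} :=
  TopologicalSpace.isOpen_generateFrom_of_mem ⟨p, rfl⟩

theorem exists_eval_ne_zero_of_isOpen {U : Set (ι → K)} (hU : IsOpen[zariskiTopology ι K] U)
    {x : ι → K} (hx : x ∈ U) :
    ∃ p : MvPolynomial ι K, MvPolynomial.eval x p ≠ 0 ∧
      {y | MvPolynomial.eval y p ≠ 0} ⊆ U := by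
  induction hU with
  | basic _ h =>
    obtain ⟨p, rfl⟩ := h
    exact ⟨p, hx, subset_rfl⟩
  | univ => exact ⟨1, by simp, Set.subset_univ _⟩
  | inter s t _ _ ihs iht =>
    obtain ⟨p, hp, hps⟩ := ihs hx.1
    obtain ⟨q, hq, hqt⟩ := iht hx.2
    refine ⟨p * q, by simp [hp, hq], fun y hy => ?_⟩
    rw [Set.mem_ofPred_eq, map_mul, mul_ne_zero_iff] at hy
    exact ⟨hps hy.1, hqt hy.2⟩
  | sUnion S _ ih =>
    obtain ⟨s, hs, hxs⟩ := hx
    obtain ⟨p, hp, hps⟩ := ih s hs hxs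
    exact ⟨p, hp, hps.trans (Set.subset_sUnion_of_mem hs)⟩

theorem eval_aeval_polynomial (γ : ι → K[X]) (p : MvPolynomial ι K) (t : K) :
    (MvPolynomial.aeval γ p).eval t = MvPolynomial.eval (fun c => (γ c).eval t) p := by
  rw [← coe_evalRingHom, MvPolynomial.aeval_def, MvPolynomial.hom_eval₂, MvPolynomial.eval,
    MvPolynomial.coe_eval₂Hom]
  congr 1
  ext
  simp

theorem exists_eval_mem_inter_of_isOpen [Infinite K] {U V : Set (ι → K)}
    (hU : IsOpen[zariskiTopology ι K] U) (hV : IsOpen[zariskiTopology ι K] V) (γ : ι → K[X])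
    {s t : K} (hs : (fun c => (γ c).eval s) ∈ U) (ht : (fun c => (γ c).eval t) ∈ V) :
    ∃ r, (fun c => (γ c).eval r) ∈ U ∩ V := by
  obtain ⟨p, hp, hpU⟩ := exists_eval_ne_zero_of_isOpen hU hs
  obtain ⟨q, hq, hqV⟩ := exists_eval_ne_zero_of_isOpen hV ht
  rw [← eval_aeval_polynomial] at hp hq
  have hp0 : MvPolynomial.aeval γ p ≠ 0 := fun h => hp (by simp [h])
  have hq0 : MvPolynomial.aeval γ q ≠ 0 := fun h => hq (by simp [h])
  obtain ⟨r, hr⟩ := exists_eval_ne_zero_of_natDegree_lt_card _ (mul_ne_zero hp0 hq0)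
    (Cardinal.natCast_lt_aleph0.trans_le (Cardinal.aleph0_le_mk K))
  rw [eval_mul, mul_ne_zero_iff, eval_aeval_polynomial, eval_aeval_polynomial] at hr
  exact ⟨r, hpU hr.1, hqV hr.2⟩

variable [Finite ι]

theorem exists_eval_eq_linearMap_apply (f : (ι → K) →ₗ[K] K) :
    ∃ p : MvPolynomial ι K, ∀ x, MvPolynomial.eval x p = f x := by
  classical
  have := Fintype.ofFinite ι
  refine ⟨∑ c, MvPolynomial.C (f fun j => if c = j then 1 else 0) * MvPolynomial.X c,
    fun x => ?_⟩
  rw [LinearMap.pi_apply_eq_sum_univ f x]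
  simp [mul_comm]

theorem exists_eval_eq_det {k : ℕ} (T : (ι → K) →ₗ[K] (Fin k → K) →ₗ[K] (Fin k → K)) :
    ∃ p : MvPolynomial ι K, ∀ x, MvPolynomial.eval x p = LinearMap.det (T x) := by
  have hentry : ∀ i j, ∃ p : MvPolynomial ι K,
      ∀ x, MvPolynomial.eval x p = LinearMap.toMatrix' (T x) i j := fun i j =>
    exists_eval_eq_linearMap_apply
      (Matrix.entryLinearMap K K i j ∘ₗ LinearMap.toMatrix'.toLinearMap ∘ₗ T)
  choose M hM using hentry
  refine ⟨(Matrix.of M).det, fun x => ?_⟩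
  rw [← LinearMap.det_toMatrix', RingHom.map_det]
  congr 1
  ext i j
  exact hM i j x

theorem isOpen_zariskiTopology_le_finrank_range {E F : Type*} [AddCommGroup E] [Module K E]
    [AddCommGroup F] [Module K F] [FiniteDimensional K F] (T : (ι → K) →ₗ[K] E →ₗ[K] F) (k : ℕ) :
    IsOpen[zariskiTopology ι K] {x | k ≤ Module.finrank K (T x).range} := by
  let _ := zariskiTopology ι K
  refine isOpen_iff_forall_mem_open.2 fun x₀ hx₀ => ?_
  obtain ⟨φ, ψ, hid⟩ := exists_comp_comp_eq_id_of_le_finrank_range (T x₀) hx₀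
  obtain ⟨p, hp⟩ : ∃ p, ∀ x, MvPolynomial.eval x p = LinearMap.det (φ ∘ₗ T x ∘ₗ ψ) :=
    exists_eval_eq_det ((T.compr₂ φ).compl₂ ψ)
  refine ⟨_, fun x hx => ?_, isOpen_zariskiTopology_eval_ne_zero p, by simp [hp, hid]⟩
  rw [Set.mem_ofPred_eq, hp] at hx
  have htop : (φ ∘ₗ T x ∘ₗ ψ).range = ⊤ :=
    LinearMap.range_eq_top.2 (LinearMap.equivOfDetNeZero _ hx).surjective
  calc
    k = Module.finrank K (φ ∘ₗ T x ∘ₗ ψ).range := by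
      rw [htop, finrank_top, Module.finrank_fin_fun]
    _ ≤ Module.finrank K ((T x).range.map φ) := Submodule.finrank_mono <| by
      rw [LinearMap.range_comp]
      exact Submodule.map_mono (LinearMap.range_comp_le_range ψ (T x))
    _ ≤ Module.finrank K (T x).range := Submodule.finrank_map_le _ _

end Zariski

section Topology

variable {X : Type*} [TopologicalSpace X]

section Semicontinuous

variable {ι : Type*} {f : X → ι → ℕ}

theorem isOpen_setOf_le_of_upperSemicontinuous [Finite ι]
    (hf : ∀ i, UpperSemicontinuous fun x => f x i) (c : ι → ℕ) : IsOpen {x | f x ≤ c} := by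
  simp only [Pi.le_def, ← Nat.lt_succ_iff, Set.ofPred_forall]
  exact isOpen_iInter_of_finite fun i => (hf i).isOpen_preimage _

theorem isClosed_setOf_le_of_upperSemicontinuous
    (hf : ∀ i, UpperSemicontinuous fun x => f x i) (c : ι → ℕ) : IsClosed {x | c ≤ f x} := by
  simp only [Pi.le_def, Set.ofPred_forall]
  exact isClosed_iInter fun i => (hf i).isClosed_preimage _

end Semicontinuous

theorem exists_mem_forall_le_of_isIrreducible {α : Type*} [PartialOrder α] [WellFoundedLT α]
    {A : Set X} (hA : IsIrreducible A) {f : X → α} (hf : ∀ x, IsOpen {z | f z ≤ f x}) :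
    ∃ x ∈ A, ∀ y ∈ A, f x ≤ f y := by
  obtain ⟨_, ⟨x, hxA, rfl⟩, hmin⟩ :=
    WellFounded.has_min (wellFounded_lt (α := α)) (f '' A) (hA.1.image f)
  refine ⟨x, hxA, fun y hyA => ?_⟩
  obtain ⟨z, hzA, hzx, hzy⟩ := hA.2 _ _ (hf x) (hf y) ⟨x, hxA, le_rfl⟩ ⟨y, hyA, le_rfl⟩
  have hzx' : f z = f x := hzx.eq_of_not_lt (hmin _ ⟨z, hzA, rfl⟩)
  exact hzx' ▸ hzy

section Fibers

variable {β : Type*} {f : X → β}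

theorem exists_subset_closure_fiber (hfin : (Set.range f).Finite) {C : Set X}
    (hC : IsIrreducible C) : ∃ x, C ⊆ closure (f ⁻¹' {f x}) := by
  classical
  obtain ⟨_, hZ, hCZ⟩ := isIrreducible_iff_sUnion_isClosed.1 hC
    (hfin.toFinset.image fun b => closure (f ⁻¹' {b}))
    (by simp) (fun x _ => by simpa using ⟨x, subset_closure rfl⟩)
  obtain ⟨x, rfl⟩ : ∃ x, closure (f ⁻¹' {f x}) = _ := by simpa using hZ
  exact ⟨x, hCZ⟩

theorem mem_irreducibleComponents_iff_exists_closure_fiber (hfin : (Set.range f).Finite)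
    (hirr : ∀ x, IsPreirreducible (f ⁻¹' {f x})) {C : Set X} :
    C ∈ irreducibleComponents X ↔ ∃ x, C = closure (f ⁻¹' {f x}) ∧
      ∀ y, closure (f ⁻¹' {f x}) ⊆ closure (f ⁻¹' {f y}) →
        closure (f ⁻¹' {f y}) ⊆ closure (f ⁻¹' {f x}) := by
  have hcl : ∀ x, IsIrreducible (closure (f ⁻¹' {f x})) := fun x =>
    IsIrreducible.closure ⟨⟨x, rfl⟩, hirr x⟩
  constructor
  · rintro ⟨hC, hmax⟩
    obtain ⟨x, hx⟩ := exists_subset_closure_fiber hfin hC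
    obtain rfl : C = closure (f ⁻¹' {f x}) := hx.antisymm (hmax (hcl x) hx)
    exact ⟨x, rfl, fun y hxy => hmax (hcl y) hxy⟩
  · rintro ⟨x, rfl, hmax⟩
    refine ⟨hcl x, fun D hD hxD => ?_⟩
    obtain ⟨y, hDy⟩ := exists_subset_closure_fiber hfin hD
    exact hDy.trans (hmax y (hxD.trans hDy))

end Fibers

end Topology

namespace QuiverData

open Module Matrix

variable {Q : QuiverData} {d : Fin Q.n → ℕ} {K : Type}

section Matrices

/-- The matrix by which the arrow `a` acts in the representation `x`. -/
def arrowMat (x : RepSpace Q d K) (a : Fin Q.numArrows) :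
    Matrix (Fin (d (Q.tgt a))) (Fin (d (Q.src a))) K :=
  Matrix.of fun v w => x ⟨a, v, w⟩

theorem ext_arrowMat {x y : RepSpace Q d K} (h : ∀ a, arrowMat x a = arrowMat y a) : x = y :=
  funext fun c => congrFun₂ (h c.1) c.2.1 c.2.2

end Matrices

variable [Field K]

section Vertices

/-- The component of an element of `⊕ᵢ K^{dᵢ}` at the vertex `i`. -/
def toVertex (i : Fin Q.n) : Carrier Q d K →ₗ[K] (Fin (d i) → K) :=
  LinearMap.funLeft K K fun v => ⟨i, v⟩

/-- The inclusion of `K^{dᵢ}` as the summand of `⊕ᵢ K^{dᵢ}` at the vertex `i`. -/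
def ofVertex (i : Fin Q.n) : (Fin (d i) → K) →ₗ[K] Carrier Q d K where
  toFun v jw := if h : jw.1 = i then v (Fin.cast (congrArg d h) jw.2) else 0
  map_add' u v := by ext jw; by_cases h : jw.1 = i <;> simp [h]
  map_smul' c v := by ext jw; by_cases h : jw.1 = i <;> simp [h]

@[simp]
theorem toVertex_ofVertex_self (i : Fin Q.n) (v : Fin (d i) → K) :
    toVertex i (ofVertex i v) = v := by
  ext w
  simp [toVertex, ofVertex, LinearMap.funLeft_apply]

theorem toVertex_ofVertex_of_ne {i j : Fin Q.n} (h : j ≠ i) (v : Fin (d i) → K) :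
    toVertex j (ofVertex i v) = 0 := by
  ext w
  simp [toVertex, ofVertex, LinearMap.funLeft_apply, h]

theorem toVertex_surjective (i : Fin Q.n) :
    Function.Surjective (toVertex i : Carrier Q d K →ₗ[K] (Fin (d i) → K)) :=
  Function.RightInverse.surjective (toVertex_ofVertex_self i)

theorem ofVertex_injective (i : Fin Q.n) :
    Function.Injective (ofVertex i : (Fin (d i) → K) →ₗ[K] Carrier Q d K) :=
  Function.LeftInverse.injective (toVertex_ofVertex_self i)

theorem ext_toVertex {m m' : Carrier Q d K} (h : ∀ i, toVertex i m = toVertex i m') : m = m' :=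
  funext fun iv => congrFun (h iv.1) iv.2

theorem proj_eq_ofVertex_comp_toVertex (i : Fin Q.n) :
    proj Q d K i = ofVertex i ∘ₗ toVertex i := by
  ext m jw
  obtain ⟨j, w⟩ := jw
  by_cases h : j = i
  · subst h; simp [proj, ofVertex, toVertex]
  · simp [proj, ofVertex, h]

theorem vdim_eq_finrank_map_toVertex (N : Submodule K (Carrier Q d K)) (i : Fin Q.n) :
    vdim Q d K N i = finrank K (N.map (toVertex i)) := by
  rw [vdim, proj_eq_ofVertex_comp_toVertex, Submodule.map_comp]
  exact (Submodule.equivMapOfInjective _ (ofVertex_injective i) _).finrank_eq.symm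

end Vertices

section Arrows

@[simp]
theorem arrowMat_add (x y : RepSpace Q d K) (a : Fin Q.numArrows) :
    arrowMat (x + y) a = arrowMat x a + arrowMat y a :=
  rfl

@[simp]
theorem arrowMat_smul (c : K) (x : RepSpace Q d K) (a : Fin Q.numArrows) :
    arrowMat (c • x) a = c • arrowMat x a :=
  rfl

theorem arrowMap_apply (x : RepSpace Q d K) (a : Fin Q.numArrows) (m : Carrier Q d K) :
    arrowMap Q d K x a m = ofVertex (Q.tgt a) (arrowMat x a *ᵥ toVertex (Q.src a) m) := by
  ext jw
  by_cases h : jw.1 = Q.tgt a <;>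
    simp [arrowMap, ofVertex, arrowMat, toVertex, LinearMap.funLeft_apply, mulVec, dotProduct, h]

end Arrows

section RadicalSocle

theorem radPow_zero (x : RepSpace Q d K) : radPow Q d K x 0 = ⊤ := by
  refine top_le_iff.1 (le_iSup_of_le ⟨[], rfl⟩ ?_)
  simp [wordMap, End.one_eq_id]

theorem radPow_one (x : RepSpace Q d K) :
    radPow Q d K x 1 = ⨆ a, (arrowMap Q d K x a).range := by
  refine le_antisymm (iSup_le fun ⟨w, hw⟩ => ?_)
    (iSup_le fun a => le_iSup_of_le ⟨[a], rfl⟩ (by simp [wordMap]))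
  obtain ⟨a, rfl⟩ := List.length_eq_one_iff.1 hw
  exact le_iSup_of_le a (by simp [wordMap])

/-- The component at the vertex `i` of the radical `J M_x`. -/
noncomputable def radAt (x : RepSpace Q d K) (i : Fin Q.n) : Submodule K (Fin (d i) → K) :=
  (radPow Q d K x 1).map (toVertex i)

/-- The component at the vertex `i` of the socle of `M_x`. -/
noncomputable def socAt (x : RepSpace Q d K) (i : Fin Q.n) : Submodule K (Fin (d i) → K) :=
  (socPow Q d K x 0).map (toVertex i)

theorem radAt_eq_iSup_range (x : RepSpace Q d K) (i : Fin Q.n) :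
    radAt x i = ⨆ a, (toVertex i ∘ₗ arrowMap Q d K x a).range := by
  simp only [radAt, radPow_one, Submodule.map_iSup, LinearMap.range_comp]

theorem mem_socPow_zero (x : RepSpace Q d K) (m : Carrier Q d K) :
    m ∈ socPow Q d K x 0 ↔ ∀ a, arrowMat x a *ᵥ toVertex (Q.src a) m = 0 := by
  simp [socPow, arrowMap_apply, (ofVertex_injective _).eq_iff' (map_zero _)]

theorem mem_socAt (x : RepSpace Q d K) (i : Fin Q.n) (v : Fin (d i) → K) :
    v ∈ socAt x i ↔ ∀ a, arrowMap Q d K x a (ofVertex i v) = 0 := by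
  constructor
  · rintro ⟨m, hm, rfl⟩ a
    rw [arrowMap_apply]
    rcases eq_or_ne (Q.src a) i with rfl | h
    · rw [toVertex_ofVertex_self, (mem_socPow_zero x m).1 hm a, map_zero]
    · rw [toVertex_ofVertex_of_ne h, mulVec_zero, map_zero]
  · intro h
    exact ⟨ofVertex i v, by simpa [socPow] using h, toVertex_ofVertex_self i v⟩

theorem radAt_le_iff {x : RepSpace Q d K} {R : ∀ i, Submodule K (Fin (d i) → K)} :
    (∀ i, radAt x i ≤ R i) ↔ ∀ a v, arrowMat x a *ᵥ v ∈ R (Q.tgt a) := by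
  simp only [radAt_eq_iSup_range, iSup_le_iff]
  constructor
  · intro h a v
    simpa [arrowMap_apply] using h (Q.tgt a) a ⟨ofVertex (Q.src a) v, rfl⟩
  · rintro h i a _ ⟨m, rfl⟩
    rw [LinearMap.comp_apply, arrowMap_apply]
    rcases eq_or_ne i (Q.tgt a) with rfl | hi
    · simpa using h a _
    · simp [toVertex_ofVertex_of_ne hi]

theorem le_socAt_iff {x : RepSpace Q d K} {R : ∀ i, Submodule K (Fin (d i) → K)} :
    (∀ i, R i ≤ socAt x i) ↔ ∀ a, ∀ v ∈ R (Q.src a), arrowMat x a *ᵥ v = 0 := by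
  constructor
  · intro h a v hv
    simpa [arrowMap_apply, (ofVertex_injective _).eq_iff' (map_zero _)] using
      (mem_socAt x _ v).1 (h _ hv) a
  · intro h i v hv
    refine (mem_socAt x i v).2 fun a => ?_
    rw [arrowMap_apply]
    rcases eq_or_ne (Q.src a) i with rfl | hi
    · rw [toVertex_ofVertex_self, h a v hv, map_zero]
    · rw [toVertex_ofVertex_of_ne hi, mulVec_zero, map_zero]

theorem topDim_add_finrank_radAt (x : RepSpace Q d K) (i : Fin Q.n) :
    topDim Q d K x i + finrank K (radAt x i) = d i := by
  have htop : vdim Q d K (radPow Q d K x 0) i = d i := by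
    rw [radPow_zero, vdim_eq_finrank_map_toVertex, Submodule.map_top,
      LinearMap.range_eq_top.2 (toVertex_surjective i), finrank_top, finrank_fin_fun]
  have hle : finrank K (radAt x i) ≤ d i := by
    simpa using Submodule.finrank_le (radAt x i)
  change vdim Q d K _ i - vdim Q d K (radPow Q d K x 1) i + _ = _
  rw [Fin.val_zero, htop, vdim_eq_finrank_map_toVertex]
  exact Nat.sub_add_cancel hle

theorem socDim_eq_finrank_socAt (x : RepSpace Q d K) (i : Fin Q.n) :
    socDim Q d K x i = finrank K (socAt x i) :=
  vdim_eq_finrank_map_toVertex _ i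

theorem topDim_le_topDim_iff {x y : RepSpace Q d K} :
    topDim Q d K y ≤ topDim Q d K x ↔ ∀ i, finrank K (radAt x i) ≤ finrank K (radAt y i) :=
  forall_congr' fun i => by
    beta_reduce
    have hx := topDim_add_finrank_radAt x i
    have hy := topDim_add_finrank_radAt y i
    omega

end RadicalSocle

section SquareZero

/-- The square of the arrow ideal acts as zero on `M_x`; these are the `x` with `J² M_x = 0`. -/
def IsSqZero (x : RepSpace Q d K) : Prop :=
  ∀ a b, arrowMap Q d K x a ∘ₗ arrowMap Q d K x b = 0

theorem IsSqZero.radPow_two {x : RepSpace Q d K} (hx : IsSqZero x) : radPow Q d K x 2 = ⊥ := by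
  refine iSup_eq_bot.2 fun ⟨w, hw⟩ => ?_
  obtain ⟨a, b, rfl⟩ := List.length_eq_two.1 hw
  simp [wordMap, End.mul_eq_comp, hx a b]

theorem IsSqZero.radAt_le_socAt {x : RepSpace Q d K} (hx : IsSqZero x) (i : Fin Q.n) :
    radAt x i ≤ socAt x i := by
  refine Submodule.map_mono ?_
  rw [radPow_one]
  refine iSup_le fun b => LinearMap.range_le_iff_comap.2 (eq_top_iff.2 fun m _ => ?_)
  simpa [socPow] using fun a => LinearMap.congr_fun (hx a b) m

theorem IsSqZero.radLayering_one {x : RepSpace Q d K} (hx : IsSqZero x) (i : Fin Q.n) :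
    radLayering Q d K 1 x 1 i = finrank K (radAt x i) := by
  change vdim Q d K (radPow Q d K x 1) i - vdim Q d K (radPow Q d K x 2) i = _
  rw [hx.radPow_two, vdim_eq_finrank_map_toVertex, vdim_eq_finrank_map_toVertex,
    Submodule.map_bot, finrank_bot, Nat.sub_zero, radAt]

theorem IsSqZero.hasDimVec_radLayering {x : RepSpace Q d K} (hx : IsSqZero x) :
    hasDimVec (radLayering Q d K 1 x) d := fun i => by
  rw [Fin.sum_univ_two, hx.radLayering_one]
  exact topDim_add_finrank_radAt x i

theorem IsSqZero.radLayering_eq_iff {x y : RepSpace Q d K} (hx : IsSqZero x) (hy : IsSqZero y) :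
    radLayering Q d K 1 x = radLayering Q d K 1 y ↔ topDim Q d K x = topDim Q d K y := by
  refine ⟨fun h => congrFun h 0, fun h => funext <| Fin.forall_fin_two.2 ⟨h, funext fun i => ?_⟩⟩
  have hsumx := hx.hasDimVec_radLayering i
  have hsumy := hy.hasDimVec_radLayering i
  have htop : radLayering Q d K 1 x 0 i = radLayering Q d K 1 y 0 i := congrFun h i
  rw [Fin.sum_univ_two] at hsumx hsumy
  omega

end SquareZero

section Semicontinuity

theorem upperSemicontinuous_of_finrank_range_add_eq {E F : Type*} [AddCommGroup E] [Module K E]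
    [AddCommGroup F] [Module K F] [FiniteDimensional K F]
    (T : RepSpace Q d K →ₗ[K] E →ₗ[K] F) {f : RepSpace Q d K → ℕ} {n : ℕ}
    (h : ∀ x, f x + finrank K (T x).range = n) : UpperSemicontinuous f := by
  refine upperSemicontinuous_iff_isOpen_preimage.2 fun k => ?_
  have hpre : f ⁻¹' Set.Iio k = {x | n + 1 - k ≤ finrank K (T x).range} := by
    ext x
    have hx := h x
    simp only [Set.mem_preimage, Set.mem_Iio, Set.mem_ofPred_eq]
    omega
  exact hpre ▸ isOpen_zariskiTopology_le_finrank_range T (n + 1 - k)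

/-- The action of the arrow `a`, as a linear function of the representation. -/
noncomputable def arrowAction (a : Fin Q.numArrows) :
    RepSpace Q d K →ₗ[K] Carrier Q d K →ₗ[K] Carrier Q d K where
  toFun x := arrowMap Q d K x a
  map_add' x y := by ext; simp [arrowMap_apply, add_mulVec]
  map_smul' c x := by ext; simp [arrowMap_apply, smul_mulVec]

theorem upperSemicontinuous_topDim (i : Fin Q.n) :
    UpperSemicontinuous fun x : RepSpace Q d K => topDim Q d K x i := by
  let T : RepSpace Q d K →ₗ[K] (Fin Q.numArrows → Carrier Q d K) →ₗ[K] (Fin (d i) → K) :=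
    (LinearMap.lsum K (fun _ => Carrier Q d K) K).toLinearMap ∘ₗ
      LinearMap.pi fun a => (arrowAction a).compr₂ (toVertex i)
  have hT : ∀ x, (T x).range = radAt x i := fun x =>
    (range_lsum _).trans (radAt_eq_iSup_range x i).symm
  exact upperSemicontinuous_of_finrank_range_add_eq T fun x => by
    rw [hT, topDim_add_finrank_radAt]

theorem upperSemicontinuous_socDim (i : Fin Q.n) :
    UpperSemicontinuous fun x : RepSpace Q d K => socDim Q d K x i := by
  let T : RepSpace Q d K →ₗ[K] (Fin (d i) → K) →ₗ[K] (Fin Q.numArrows → Carrier Q d K) :=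
    LinearMap.mk₂ K (fun x v a => arrowAction a x (ofVertex i v))
      (by intros; ext; simp) (by intros; ext; simp) (by intros; ext; simp) (by intros; ext; simp)
  have hT : ∀ x, (T x).ker = socAt x i := fun x => by
    ext v
    exact funext_iff.trans (mem_socAt x i v).symm
  exact upperSemicontinuous_of_finrank_range_add_eq T fun x => by
    rw [socDim_eq_finrank_socAt, ← hT, add_comm, LinearMap.finrank_range_add_finrank_ker,
      finrank_fin_fun]

end Semicontinuity

section Sandwiched

/-- `J M_x ⊆ R ⊆ soc M_x` for the subspace `R = ⊕ᵢ Rᵢ`, in terms of the matrices of `x`. -/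
def IsSandwiched (R : ∀ i, Submodule K (Fin (d i) → K)) (x : RepSpace Q d K) : Prop :=
  (∀ a v, arrowMat x a *ᵥ v ∈ R (Q.tgt a)) ∧ ∀ a, ∀ v ∈ R (Q.src a), arrowMat x a *ᵥ v = 0

variable {R : ∀ i, Submodule K (Fin (d i) → K)} {x y : RepSpace Q d K}

theorem isSandwiched_iff :
    IsSandwiched R x ↔ (∀ i, radAt x i ≤ R i) ∧ ∀ i, R i ≤ socAt x i :=
  and_congr radAt_le_iff.symm le_socAt_iff.symm

theorem IsSqZero.isSandwiched_radAt (hx : IsSqZero x) : IsSandwiched (radAt x) x :=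
  isSandwiched_iff.2 ⟨fun _ => le_rfl, hx.radAt_le_socAt⟩

theorem IsSandwiched.isSqZero (hx : IsSandwiched R x) : IsSqZero x := fun a b => by
  refine LinearMap.ext fun m => ?_
  rw [LinearMap.comp_apply, arrowMap_apply x b]
  exact (mem_socAt x _ _).1 ((isSandwiched_iff.1 hx).2 _ (hx.1 b _)) a

theorem IsSandwiched.smul_add_smul (hx : IsSandwiched R x) (hy : IsSandwiched R y) (s t : K) :
    IsSandwiched R (s • x + t • y) := by
  constructor
  · intro a v
    simpa [add_mulVec, smul_mulVec] using
      add_mem ((R _).smul_mem s (hx.1 a v)) ((R _).smul_mem t (hy.1 a v))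
  · intro a v hv
    simp [add_mulVec, smul_mulVec, hx.2 a v hv, hy.2 a v hv]

end Sandwiched

section Relations

theorem proj_mul_proj (i j : Fin Q.n) :
    (proj Q d K i * proj Q d K j : End K (Carrier Q d K)) = if i = j then proj Q d K i else 0 := by
  split_ifs with h
  · subst h
    ext1; ext1; simp [proj_eq_ofVertex_comp_toVertex]
  · ext; simp [proj_eq_ofVertex_comp_toVertex, toVertex_ofVertex_of_ne h]

theorem proj_mul_arrowMap (x : RepSpace Q d K) (i : Fin Q.n) (a : Fin Q.numArrows) :
    (proj Q d K i * arrowMap Q d K x a : End K (Carrier Q d K)) =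
      if i = Q.tgt a then arrowMap Q d K x a else 0 := by
  split_ifs with h
  · subst h
    ext; simp [proj_eq_ofVertex_comp_toVertex, arrowMap_apply]
  · ext; simp [proj_eq_ofVertex_comp_toVertex, arrowMap_apply, toVertex_ofVertex_of_ne h]

theorem arrowMap_mul_proj (x : RepSpace Q d K) (a : Fin Q.numArrows) (i : Fin Q.n) :
    (arrowMap Q d K x a * proj Q d K i : End K (Carrier Q d K)) =
      if Q.src a = i then arrowMap Q d K x a else 0 := by
  split_ifs with h
  · subst h
    ext; simp [proj_eq_ofVertex_comp_toVertex, arrowMap_apply]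
  · ext; simp [proj_eq_ofVertex_comp_toVertex, arrowMap_apply, toVertex_ofVertex_of_ne h]

theorem sum_proj : (∑ i, proj Q d K i : End K (Carrier Q d K)) = 1 := by
  ext m jw
  simp [Finset.sum_apply, proj]

/-- The action on `M_x` of the element `∑ c_i e_i + ∑ l_a a` of the path algebra. -/
noncomputable def evalLinear (c : Fin Q.n → K) (l : Fin Q.numArrows → K) (x : RepSpace Q d K) :
    End K (Carrier Q d K) :=
  ∑ i, c i • proj Q d K i + ∑ a, l a • arrowMap Q d K x a

theorem IsSqZero.evalLinear_mul {x : RepSpace Q d K} (hx : IsSqZero x) (c c' : Fin Q.n → K)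
    (l l' : Fin Q.numArrows → K) :
    evalLinear c l x * evalLinear c' l' x =
      evalLinear (c * c') (fun a => l a * c' (Q.src a) + c (Q.tgt a) * l' a) x := by
  have hx' : ∀ a b, (arrowMap Q d K x a * arrowMap Q d K x b : End K (Carrier Q d K)) = 0 := hx
  simp only [evalLinear, add_mul, mul_add, Finset.sum_mul_sum, smul_mul_smul_comm, proj_mul_proj,
    proj_mul_arrowMap, arrowMap_mul_proj, hx', smul_ite, smul_zero, Finset.sum_ite_eq,
    Finset.mem_univ, if_true, Finset.sum_const_zero]
  rw [Finset.sum_comm]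
  simp [add_smul, Finset.sum_add_distrib, add_assoc]

-- Modulo `J²` the path algebra is spanned by the vertices and the arrows.
theorem exists_evalRel_eq_evalLinear (r : FreeAlgebra K (Fin Q.n ⊕ Fin Q.numArrows)) :
    ∃ c l, ∀ x : RepSpace Q d K, IsSqZero x → evalRel Q d K x r = evalLinear c l x := by
  induction r using FreeAlgebra.induction with
  | grade0 k =>
    exact ⟨fun _ => k, 0, fun x _ => by
      simp [evalLinear, ← Finset.smul_sum, sum_proj, Algebra.algebraMap_eq_smul_one]⟩
  | grade1 g =>
    rcases g with i | a
    · exact ⟨Pi.single i 1, 0, fun x _ => by simp [evalLinear, evalRel, Pi.single_apply, ite_smul]⟩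
    · exact ⟨0, Pi.single a 1, fun x _ => by simp [evalLinear, evalRel, Pi.single_apply, ite_smul]⟩
  | mul r s hr hs =>
    obtain ⟨c, l, h⟩ := hr
    obtain ⟨c', l', h'⟩ := hs
    exact ⟨_, _, fun x hx => by rw [map_mul, h x hx, h' x hx, hx.evalLinear_mul]⟩
  | add r s hr hs =>
    obtain ⟨c, l, h⟩ := hr
    obtain ⟨c', l', h'⟩ := hs
    refine ⟨c + c', l + l', fun x hx => ?_⟩
    rw [map_add, h x hx, h' x hx]
    simp only [evalLinear, Pi.add_apply, add_smul, Finset.sum_add_distrib]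
    abel

theorem evalLinear_smul_add_smul {s t : K} (hst : s + t = 1) (c : Fin Q.n → K)
    (l : Fin Q.numArrows → K) (x y : RepSpace Q d K) :
    evalLinear c l (s • x + t • y) = s • evalLinear c l x + t • evalLinear c l y := by
  have harrow : ∀ a, arrowMap Q d K (s • x + t • y) a =
      s • arrowMap Q d K x a + t • arrowMap Q d K y a := fun a => by
    change arrowAction a _ = s • arrowAction a x + t • arrowAction a y
    rw [map_add, map_smul, map_smul]
  have hproj : ∑ i, c i • proj Q d K i =
      s • ∑ i, c i • proj Q d K i + t • ∑ i, c i • proj Q d K i := by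
    rw [← add_smul, hst, one_smul]
  simp only [evalLinear, harrow, smul_add, Finset.sum_add_distrib, Finset.smul_sum,
    smul_comm _ s, smul_comm _ t]
  rw [hproj]
  simp only [Finset.smul_sum]
  abel

theorem smul_add_smul_mem_RepVar {Rels : Set (FreeAlgebra K (Fin Q.n ⊕ Fin Q.numArrows))}
    {R : ∀ i, Submodule K (Fin (d i) → K)} {x y : RepSpace Q d K} (hx : x ∈ RepVar Q d K Rels)
    (hy : y ∈ RepVar Q d K Rels) (hxR : IsSandwiched R x) (hyR : IsSandwiched R y)
    {s t : K} (hst : s + t = 1) : s • x + t • y ∈ RepVar Q d K Rels := fun r hr => by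
  obtain ⟨c, l, h⟩ := exists_evalRel_eq_evalLinear (d := d) r
  rw [h _ (hxR.smul_add_smul hyR s t).isSqZero, evalLinear_smul_add_smul hst,
    ← h x hxR.isSqZero, ← h y hyR.isSqZero, hx r hr, hy r hr, smul_zero, smul_zero, add_zero]

end Relations

section Conjugation

/-- The action of `g ∈ GL(d) = ∏ᵢ GL(dᵢ)` on the representation space by change of bases. -/
def conj (g : ∀ i, (Matrix (Fin (d i)) (Fin (d i)) K)ˣ) (x : RepSpace Q d K) : RepSpace Q d K :=
  fun c => ((g (Q.tgt c.1)).1 * arrowMat x c.1 * ((g (Q.src c.1))⁻¹).1) c.2.1 c.2.2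

theorem arrowMat_conj (g : ∀ i, (Matrix (Fin (d i)) (Fin (d i)) K)ˣ) (x : RepSpace Q d K)
    (a : Fin Q.numArrows) :
    arrowMat (conj g x) a = (g (Q.tgt a)).1 * arrowMat x a * ((g (Q.src a))⁻¹).1 :=
  rfl

theorem conj_one (x : RepSpace Q d K) : conj 1 x = x :=
  ext_arrowMat fun a => by simp [arrowMat_conj]

theorem conj_inv_conj (g : ∀ i, (Matrix (Fin (d i)) (Fin (d i)) K)ˣ) (x : RepSpace Q d K) :
    conj g⁻¹ (conj g x) = x :=
  ext_arrowMat fun a => by simp [arrowMat_conj, Matrix.mul_assoc]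

theorem IsSandwiched.conj {R : ∀ i, Submodule K (Fin (d i) → K)} {x : RepSpace Q d K}
    (hx : IsSandwiched R x) (g : ∀ i, (Matrix (Fin (d i)) (Fin (d i)) K)ˣ) :
    IsSandwiched (fun i => (R i).map (mulVecLin (g i).1)) (conj g x) := by
  constructor
  · intro a v
    rw [arrowMat_conj, ← mulVec_mulVec, ← mulVec_mulVec]
    exact Submodule.mem_map_of_mem (hx.1 a _)
  · rintro a _ ⟨v, hv, rfl⟩
    rw [arrowMat_conj, mulVecLin_apply, mulVec_mulVec, Matrix.mul_assoc, Units.inv_mul,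
      Matrix.mul_one, ← mulVec_mulVec, hx.2 a v hv, mulVec_zero]

/-- The block diagonal endomorphism of `⊕ᵢ K^{dᵢ}` with blocks `gᵢ`. -/
def blockMap (g : ∀ i, Matrix (Fin (d i)) (Fin (d i)) K) : Carrier Q d K →ₗ[K] Carrier Q d K :=
  LinearMap.pi fun iv => LinearMap.proj iv.2 ∘ₗ mulVecLin (g iv.1) ∘ₗ toVertex iv.1

theorem toVertex_blockMap (g : ∀ i, Matrix (Fin (d i)) (Fin (d i)) K) (m : Carrier Q d K)
    (i : Fin Q.n) : toVertex i (blockMap g m) = g i *ᵥ toVertex i m :=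
  rfl

theorem blockMap_ofVertex (g : ∀ i, Matrix (Fin (d i)) (Fin (d i)) K) (i : Fin Q.n)
    (v : Fin (d i) → K) : blockMap g (ofVertex i v) = ofVertex i (g i *ᵥ v) :=
  ext_toVertex fun j => by
    rw [toVertex_blockMap]
    rcases eq_or_ne j i with rfl | h
    · simp
    · simp [toVertex_ofVertex_of_ne h]

theorem blockMap_surjective (g : ∀ i, (Matrix (Fin (d i)) (Fin (d i)) K)ˣ) :
    Function.Surjective (blockMap fun i => (g i).1) := fun m =>
  ⟨blockMap (fun i => ((g i)⁻¹).1) m, ext_toVertex fun i => by simp [toVertex_blockMap]⟩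

theorem repHom_blockMap_conj (g : ∀ i, (Matrix (Fin (d i)) (Fin (d i)) K)ˣ)
    (x : RepSpace Q d K) : RepHom Q K d d x (conj g x) (blockMap fun i => (g i).1) := by
  constructor
  · intro a
    refine LinearMap.ext fun m => ?_
    simp [arrowMap_apply, blockMap_ofVertex, toVertex_blockMap, arrowMat_conj, Matrix.mul_assoc]
  · intro i
    refine LinearMap.ext fun m => ?_
    simp [proj_eq_ofVertex_comp_toVertex, blockMap_ofVertex, toVertex_blockMap]

section RepHom

variable {dx dy : Fin Q.n → ℕ} {x : RepSpace Q dx K} {y : RepSpace Q dy K}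
  {φ : Carrier Q dx K →ₗ[K] Carrier Q dy K}

theorem RepHom.comp_evalRel (hφ : RepHom Q K dx dy x y φ)
    (r : FreeAlgebra K (Fin Q.n ⊕ Fin Q.numArrows)) :
    φ ∘ₗ evalRel Q dx K x r = evalRel Q dy K y r ∘ₗ φ := by
  induction r using FreeAlgebra.induction with
  | grade0 k => ext; simp [Algebra.algebraMap_eq_smul_one]
  | grade1 g =>
    rcases g with i | a
    · simpa [evalRel] using hφ.2 i
    · simpa [evalRel] using hφ.1 a
  | mul r s hr hs =>
    rw [map_mul, map_mul, End.mul_eq_comp, End.mul_eq_comp, ← LinearMap.comp_assoc, hr,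
      LinearMap.comp_assoc, hs, LinearMap.comp_assoc]
  | add r s hr hs => rw [map_add, map_add, LinearMap.comp_add, hr, hs, LinearMap.add_comp]

theorem RepHom.mem_RepVar (hφ : RepHom Q K dx dy x y φ) (hsurj : Function.Surjective φ)
    {Rels : Set (FreeAlgebra K (Fin Q.n ⊕ Fin Q.numArrows))} (hx : x ∈ RepVar Q dx K Rels) :
    y ∈ RepVar Q dy K Rels := fun r hr => by
  rw [← LinearMap.cancel_right hsurj, ← hφ.comp_evalRel, hx r hr, LinearMap.comp_zero,
    LinearMap.zero_comp]

end RepHom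

theorem conj_mem_RepVar {Rels : Set (FreeAlgebra K (Fin Q.n ⊕ Fin Q.numArrows))}
    {x : RepSpace Q d K} (hx : x ∈ RepVar Q d K Rels)
    (g : ∀ i, (Matrix (Fin (d i)) (Fin (d i)) K)ˣ) : conj g x ∈ RepVar Q d K Rels :=
  (repHom_blockMap_conj g x).mem_RepVar (blockMap_surjective g) hx

end Conjugation

section Curve

open Polynomial

/-- The one-parameter family `t ↦ 1 + t N` of invertible matrices attached to `N` with `N² = 0`,
at each vertex. -/
def unipotent {N : ∀ i, Matrix (Fin (d i)) (Fin (d i)) K} (hN : ∀ i, N i * N i = 0) (t : K)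
    (i : Fin Q.n) : (Matrix (Fin (d i)) (Fin (d i)) K)ˣ where
  val := 1 + t • N i
  inv := 1 - t • N i
  val_inv := by simp [add_mul, mul_sub, hN i]
  inv_val := by simp [sub_mul, mul_add, hN i]

theorem unipotent_zero {N : ∀ i, Matrix (Fin (d i)) (Fin (d i)) K} (hN : ∀ i, N i * N i = 0) :
    unipotent hN 0 = 1 := by
  ext i : 2
  simp [unipotent]

/-- A curve of representations, from `x` at `t = 0` to `y` at `t = 1`: the segment from `x` to the
translate of `y` under `1 + N`, moved back along the inverses of the `1 + t N`. -/
def curve {N : ∀ i, Matrix (Fin (d i)) (Fin (d i)) K} (hN : ∀ i, N i * N i = 0)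
    (x y : RepSpace Q d K) (t : K) : RepSpace Q d K :=
  conj (unipotent hN t)⁻¹ ((1 - t) • x + t • conj (unipotent hN 1) y)

variable {N : ∀ i, Matrix (Fin (d i)) (Fin (d i)) K} (hN : ∀ i, N i * N i = 0)

theorem curve_zero (x y : RepSpace Q d K) : curve hN x y 0 = x := by
  simp [curve, unipotent_zero, conj_one]

theorem curve_one (x y : RepSpace Q d K) : curve hN x y 1 = y := by
  simp [curve, conj_inv_conj]

theorem exists_eval_eq_curve (x y : RepSpace Q d K) :
    ∃ γ : Coords Q d → K[X], ∀ t, (fun c => (γ c).eval t) = curve hN x y t := by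
  set y' := conj (unipotent hN 1) y
  refine ⟨fun c => ∑ j, (∑ i, (C ((1 : Matrix _ _ K) c.2.1 i) - X * C (N _ c.2.1 i)) *
    ((1 - X) * C (arrowMat x c.1 i j) + X * C (arrowMat y' c.1 i j))) *
      (C ((1 : Matrix _ _ K) j c.2.2) + X * C (N _ j c.2.2)), fun t => ?_⟩
  ext c
  simp only [eval_finsetSum, eval_mul, eval_add, eval_sub, eval_X, eval_C, eval_one]
  rfl

theorem curve_mem_RepVar {Rels : Set (FreeAlgebra K (Fin Q.n ⊕ Fin Q.numArrows))}
    {R : ∀ i, Submodule K (Fin (d i) → K)} {x y : RepSpace Q d K}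
    (hx : x ∈ RepVar Q d K Rels) (hy : y ∈ RepVar Q d K Rels) (hxR : IsSandwiched R x)
    (hyR : IsSandwiched R (conj (unipotent hN 1) y)) (t : K) :
    curve hN x y t ∈ RepVar Q d K Rels :=
  conj_mem_RepVar (smul_add_smul_mem_RepVar hx (conj_mem_RepVar hy _) hxR hyR
    (sub_add_cancel 1 t)) _

theorem finrank_radAt_curve_le {R : ∀ i, Submodule K (Fin (d i) → K)} {x y : RepSpace Q d K}
    (hxR : IsSandwiched R x) (hyR : IsSandwiched R (conj (unipotent hN 1) y)) (t : K)
    (i : Fin Q.n) : finrank K (radAt (curve hN x y t) i) ≤ finrank K (R i) :=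
  (Submodule.finrank_mono ((isSandwiched_iff.1
    ((hxR.smul_add_smul hyR (1 - t) t).conj (unipotent hN t)⁻¹)).1 i)).trans
      (Submodule.finrank_map_le _ _)

theorem exists_matrix_mul_self_eq_zero_map_mulVecLin {ι : Type*} [Fintype ι] [DecidableEq ι]
    {R R' : Submodule K (ι → K)} (h : finrank K R = finrank K R') :
    ∃ N : Matrix ι ι K, N * N = 0 ∧ R.map (mulVecLin (1 + N)) = R' := by
  obtain ⟨N, hN, hmap⟩ := exists_mul_self_eq_zero_map_one_add h
  refine ⟨LinearMap.toMatrix' N, by rw [← LinearMap.toMatrix'_mul, hN, map_zero], ?_⟩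
  rwa [mulVecLin_add, mulVecLin_one, ← toLin'_apply', toLin'_toMatrix']

theorem exists_polynomial_curve {Rels : Set (FreeAlgebra K (Fin Q.n ⊕ Fin Q.numArrows))}
    {x y : RepSpace Q d K} (hx : x ∈ RepVar Q d K Rels) (hy : y ∈ RepVar Q d K Rels)
    (hx0 : IsSqZero x) (hy0 : IsSqZero y) (htop : topDim Q d K y ≤ topDim Q d K x)
    (hsoc : ∀ i, finrank K (radAt y i) ≤ socDim Q d K x i) :
    ∃ γ : Coords Q d → K[X], (fun c => (γ c).eval 0) = x ∧ (fun c => (γ c).eval 1) = y ∧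
      ∀ t, (fun c => (γ c).eval t) ∈ RepVar Q d K Rels ∧
        topDim Q d K y ≤ topDim Q d K fun c => (γ c).eval t := by
  simp only [socDim_eq_finrank_socAt] at hsoc
  choose R hradR hRsoc hR using fun i =>
    exists_between_finrank_eq (hx0.radAt_le_socAt i) (topDim_le_topDim_iff.1 htop i) (hsoc i)
  choose N hN hNR using fun i => exists_matrix_mul_self_eq_zero_map_mulVecLin (hR i).symm
  have hxR : IsSandwiched R x := isSandwiched_iff.2 ⟨hradR, hRsoc⟩
  have hyR : IsSandwiched R (conj (unipotent hN 1) y) := by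
    simpa only [unipotent, one_smul, hNR] using hy0.isSandwiched_radAt.conj (unipotent hN 1)
  obtain ⟨γ, hγ⟩ := exists_eval_eq_curve hN x y
  refine ⟨γ, (hγ 0).trans (curve_zero hN x y), (hγ 1).trans (curve_one hN x y), fun t => ?_⟩
  rw [hγ t]
  exact ⟨curve_mem_RepVar hN hx hy hxR hyR t,
    topDim_le_topDim_iff.2 fun i => (finrank_radAt_curve_le hN hxR hyR t i).trans (hR i).le⟩

end Curve

section Stratification

variable {Rels : Set (FreeAlgebra K (Fin Q.n ⊕ Fin Q.numArrows))} {S : Fin 2 → Fin Q.n → ℕ}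

/-- `Rep S` as a subset of the variety `Rep_d(Λ)`, which provides the topology. -/
def stratum (d : Fin Q.n → ℕ) (Rels : Set (FreeAlgebra K (Fin Q.n ⊕ Fin Q.numArrows)))
    (S : Fin 2 → Fin Q.n → ℕ) : Set (GenV Q d K Rels) :=
  {x | radLayering Q d K 1 x.1 = S}

/-- `Rep S` as a subset of the ambient representation space; the generic socle of `Rep S` is the
generic socle of this set. -/
def repSet (d : Fin Q.n → ℕ) (Rels : Set (FreeAlgebra K (Fin Q.n ⊕ Fin Q.numArrows)))
    (S : Fin 2 → Fin Q.n → ℕ) : Set (RepSpace Q d K) :=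
  {x | x ∈ RepVar Q d K Rels ∧ radLayering Q d K 1 x = S}

theorem upperSemicontinuous_topDim_val (i : Fin Q.n) :
    UpperSemicontinuous fun x : GenV Q d K Rels => topDim Q d K x.1 i :=
  (upperSemicontinuous_topDim i).comp continuous_subtype_val

theorem upperSemicontinuous_socDim_val (i : Fin Q.n) :
    UpperSemicontinuous fun x : GenV Q d K Rels => socDim Q d K x.1 i :=
  (upperSemicontinuous_socDim i).comp continuous_subtype_val

theorem finite_range_radLayering :
    (Set.range fun x : GenV Q d K Rels => radLayering Q d K 1 x.1).Finite := by
  refine (Set.finite_Icc (0 : Fin 2 → Fin Q.n → ℕ) fun _ => d).subset ?_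
  rintro _ ⟨x, rfl⟩
  refine ⟨fun _ _ => Nat.zero_le _, fun l i => (Nat.sub_le _ _).trans ?_⟩
  rw [vdim_eq_finrank_map_toVertex]
  simpa using Submodule.finrank_le ((radPow Q d K x.1 l).map (toVertex i))

variable (hJ2 : ∀ x ∈ RepVar Q d K Rels, IsSqZero x)
include hJ2

theorem mem_stratum_radLayering_iff {x y : GenV Q d K Rels} :
    x ∈ stratum d Rels (radLayering Q d K 1 y.1) ↔ topDim Q d K x.1 = topDim Q d K y.1 :=
  (hJ2 _ x.2).radLayering_eq_iff (hJ2 _ y.2)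

variable [Infinite K]

theorem exists_mem_inter_topDim_eq {x y : GenV Q d K Rels}
    (htop : topDim Q d K y.1 ≤ topDim Q d K x.1)
    (hsoc : ∀ i, finrank K (radAt y.1 i) ≤ socDim Q d K x.1 i)
    {U V : Set (GenV Q d K Rels)} (hU : IsOpen U) (hV : IsOpen V) (hxU : x ∈ U) (hyV : y ∈ V) :
    ∃ z ∈ U ∩ V, topDim Q d K z.1 = topDim Q d K y.1 := by
  obtain ⟨γ, h0, h1, hγ⟩ :=
    exists_polynomial_curve x.2 y.2 (hJ2 _ x.2) (hJ2 _ y.2) htop hsoc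
  obtain ⟨U', hU', rfl⟩ := isOpen_induced_iff.1 hU
  obtain ⟨V', hV', rfl⟩ := isOpen_induced_iff.1 hV
  have htop_open : IsOpen {z : RepSpace Q d K | topDim Q d K z ≤ topDim Q d K y.1} :=
    isOpen_setOf_le_of_upperSemicontinuous upperSemicontinuous_topDim _
  obtain ⟨r, hrU, hrV, hrtop⟩ := exists_eval_mem_inter_of_isOpen hU' (hV'.inter htop_open) γ
    (s := 0) (t := 1) (h0 ▸ hxU)
    (by rw [h1]; exact ⟨hyV, le_refl (topDim Q d K y.1)⟩)
  exact ⟨⟨_, (hγ r).1⟩, ⟨hrU, hrV⟩, le_antisymm hrtop (hγ r).2⟩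

theorem isPreirreducible_stratum : IsPreirreducible (stratum d Rels S) := by
  rintro U V hU hV ⟨x, hxS, hxU⟩ ⟨y, rfl, hyV⟩
  have hxy := (mem_stratum_radLayering_iff hJ2).1 hxS
  have hsoc : ∀ i, finrank K (radAt y.1 i) ≤ socDim Q d K x.1 i := fun i => by
    rw [socDim_eq_finrank_socAt]
    exact (topDim_le_topDim_iff.1 hxy.le i).trans
      (Submodule.finrank_mono ((hJ2 _ x.2).radAt_le_socAt i))
  obtain ⟨z, hz, hzy⟩ := exists_mem_inter_topDim_eq hJ2 hxy.ge hsoc hU hV hxU hyV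
  exact ⟨z, (mem_stratum_radLayering_iff hJ2).2 hzy, hz⟩

theorem exists_isGenericSocle_repSet (x : GenV Q d K Rels) :
    ∃ U0, IsGenericSocle Q d K (repSet d Rels (radLayering Q d K 1 x.1)) U0 := by
  obtain ⟨y, hy, hmin⟩ := exists_mem_forall_le_of_isIrreducible
    (f := fun z : GenV Q d K Rels => socDim Q d K z.1)
    (A := stratum d Rels (radLayering Q d K 1 x.1)) ⟨⟨x, rfl⟩, isPreirreducible_stratum hJ2⟩
    fun z => isOpen_setOf_le_of_upperSemicontinuous upperSemicontinuous_socDim_val _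
  exact ⟨_, fun z hz => hmin ⟨z, hz.1⟩ hz.2, y.1, ⟨y.2, hy⟩, rfl⟩

theorem closure_stratum_eq {U0 : Fin Q.n → ℕ}
    (hU0 : IsGenericSocle Q d K (repSet d Rels S) U0) :
    closure (stratum d Rels S) =
      {x : GenV Q d K Rels | S 0 ≤ topDim Q d K x.1 ∧ U0 ≤ socDim Q d K x.1} := by
  obtain ⟨hmin, y, ⟨hy, rfl⟩, rfl⟩ := hU0
  apply Set.Subset.antisymm
  · refine closure_minimal (fun z hz => ⟨?_, hmin z.1 ⟨z.2, hz⟩⟩)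
      ((isClosed_setOf_le_of_upperSemicontinuous upperSemicontinuous_topDim_val _).inter
        (isClosed_setOf_le_of_upperSemicontinuous upperSemicontinuous_socDim_val _))
    exact (congrFun hz 0).ge
  · rintro x ⟨htop, hsoc⟩
    refine mem_closure_iff.2 fun O hO hxO => ?_
    have hrad : ∀ i, finrank K (radAt y i) ≤ socDim Q d K x.1 i := fun i =>
      ((Submodule.finrank_mono ((hJ2 y hy).radAt_le_socAt i)).trans_eq
        (socDim_eq_finrank_socAt y i).symm).trans (hsoc i)
    obtain ⟨z, ⟨hzO, -⟩, hzy⟩ := exists_mem_inter_topDim_eq hJ2 (y := ⟨y, hy⟩) htop hrad hO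
      isOpen_univ hxO (Set.mem_univ _)
    exact ⟨z, hzO, (mem_stratum_radLayering_iff hJ2 (y := ⟨y, hy⟩)).2 hzy⟩

theorem stratum_subset_closure_stratum_iff {S' : Fin 2 → Fin Q.n → ℕ} {U0 U0' : Fin Q.n → ℕ}
    (hU0 : IsGenericSocle Q d K (repSet d Rels S) U0)
    (hU0' : IsGenericSocle Q d K (repSet d Rels S') U0') :
    stratum d Rels S' ⊆ closure (stratum d Rels S) ↔ S 0 ≤ S' 0 ∧ U0 ≤ U0' := by
  rw [closure_stratum_eq hJ2 hU0]
  constructor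
  · obtain ⟨-, y, ⟨hy, rfl⟩, rfl⟩ := hU0'
    exact fun h => @h ⟨y, hy⟩ rfl
  · rintro ⟨htop, hsoc⟩ x rfl
    exact ⟨htop, hsoc.trans (hU0'.1 x.1 ⟨x.2, rfl⟩)⟩

theorem closure_stratum_maximal_iff {x : GenV Q d K Rels} {U0 : Fin Q.n → ℕ}
    (hU0 : IsGenericSocle Q d K (repSet d Rels (radLayering Q d K 1 x.1)) U0) :
    (∀ y : GenV Q d K Rels,
      closure (stratum d Rels (radLayering Q d K 1 x.1)) ⊆
          closure (stratum d Rels (radLayering Q d K 1 y.1)) →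
        closure (stratum d Rels (radLayering Q d K 1 y.1)) ⊆
          closure (stratum d Rels (radLayering Q d K 1 x.1))) ↔
      ∀ y ∈ RepVar Q d K Rels, topDim Q d K y ≤ topDim Q d K x.1 → socDim Q d K y ≤ U0 →
        topDim Q d K y = topDim Q d K x.1 ∧ socDim Q d K y = U0 := by
  simp only [isClosed_closure.closure_subset_iff]
  constructor
  · intro hmax y hy htop hsoc
    obtain ⟨V0, hV0⟩ := exists_isGenericSocle_repSet hJ2 ⟨y, hy⟩
    have hVy : V0 ≤ socDim Q d K y := hV0.1 y ⟨hy, rfl⟩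
    have hback := hmax ⟨y, hy⟩
      ((stratum_subset_closure_stratum_iff hJ2 hV0 hU0).2 ⟨htop, hVy.trans hsoc⟩)
    obtain ⟨htop', hsoc'⟩ := (stratum_subset_closure_stratum_iff hJ2 hU0 hV0).1 hback
    exact ⟨htop.antisymm htop', hsoc.antisymm (hsoc'.trans hVy)⟩
  · intro hmin y hxy
    obtain ⟨V0, hV0⟩ := exists_isGenericSocle_repSet hJ2 y
    obtain ⟨htop, hsoc⟩ := (stratum_subset_closure_stratum_iff hJ2 hV0 hU0).1 hxy
    obtain ⟨z, ⟨hz, hzy⟩, hzV⟩ := hV0.2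
    have htopz : topDim Q d K z = topDim Q d K y.1 := congrFun hzy 0
    obtain ⟨htop', hsoc'⟩ := hmin z hz (htopz.trans_le htop) (hzV.trans_le hsoc)
    exact (stratum_subset_closure_stratum_iff hJ2 hU0 hV0).2
      ⟨(htop'.symm.trans htopz).le, (hsoc'.symm.trans hzV).le⟩

theorem mem_irreducibleComponents_iff_exists_closure_stratum {C : Set (GenV Q d K Rels)} :
    C ∈ irreducibleComponents (GenV Q d K Rels) ↔
      ∃ (S : Fin 2 → Fin Q.n → ℕ) (U0 : Fin Q.n → ℕ), hasDimVec S d ∧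
        IsGenericSocle Q d K (repSet d Rels S) U0 ∧
        (∀ x ∈ RepVar Q d K Rels, topDim Q d K x ≤ S 0 → socDim Q d K x ≤ U0 →
          topDim Q d K x = S 0 ∧ socDim Q d K x = U0) ∧
        C = closure (stratum d Rels S) := by
  rw [mem_irreducibleComponents_iff_exists_closure_fiber finite_range_radLayering
    fun x => isPreirreducible_stratum hJ2]
  constructor
  · rintro ⟨x, rfl, hmax⟩
    obtain ⟨U0, hU0⟩ := exists_isGenericSocle_repSet hJ2 x
    exact ⟨_, U0, (hJ2 _ x.2).hasDimVec_radLayering, hU0,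
      (closure_stratum_maximal_iff hJ2 hU0).1 hmax, rfl⟩
  · rintro ⟨S, U0, -, hU0, hmin, rfl⟩
    obtain ⟨x, ⟨hx, rfl⟩, -⟩ := hU0.2
    exact ⟨⟨x, hx⟩, rfl, (closure_stratum_maximal_iff hJ2 (x := ⟨x, hx⟩) hU0).2 hmin⟩

end Stratification

end QuiverData

open QuiverData in
theorem statement_12_general (K : Type) [Field K] [Infinite K]
    (Q : QuiverData) (d : Fin Q.n → ℕ)
    (Rels : Set (FreeAlgebra K (Fin Q.n ⊕ Fin Q.numArrows)))
    (hJ2 : ∀ x ∈ RepVar Q d K Rels, ∀ a b,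
      (arrowMap Q d K x a) ∘ₗ (arrowMap Q d K x b) = 0) :
    (∀ (S Stilde : Fin 2 → Fin Q.n → ℕ) (U0 U0' : Fin Q.n → ℕ),
      IsGenericSocle Q d K
        {x | x ∈ RepVar Q d K Rels ∧ radLayering Q d K 1 x = S} U0 →
      IsGenericSocle Q d K
        {x | x ∈ RepVar Q d K Rels ∧ radLayering Q d K 1 x = Stilde} U0' →
      ({x : GenV Q d K Rels | radLayering Q d K 1 x.1 = Stilde} ⊆
          closure {x : GenV Q d K Rels | radLayering Q d K 1 x.1 = S}
        ↔ (S 0 ≤ Stilde 0 ∧ U0 ≤ U0'))) ∧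
    ∀ C : Set (GenV Q d K Rels),
      C ∈ irreducibleComponents (GenV Q d K Rels) ↔
      ∃ (S : Fin 2 → Fin Q.n → ℕ) (U0 : Fin Q.n → ℕ), hasDimVec S d ∧
        IsGenericSocle Q d K
          {x | x ∈ RepVar Q d K Rels ∧ radLayering Q d K 1 x = S} U0 ∧
        (∀ x ∈ RepVar Q d K Rels, topDim Q d K x ≤ S 0 → socDim Q d K x ≤ U0 →
          (topDim Q d K x = S 0 ∧ socDim Q d K x = U0)) ∧
        C = closure {x : GenV Q d K Rels | radLayering Q d K 1 x.1 = S} :=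
  ⟨fun _ _ _ _ hU0 hU0' => stratum_subset_closure_stratum_iff hJ2 hU0 hU0',
    fun _ => mem_irreducibleComponents_iff_exists_closure_stratum hJ2⟩

open QuiverData in
/-- Let `Λ = KQ/I` with `J² = 0`. For `d`-dimensional semisimple
sequences `S`, `S̃` (pairs), with generic socles `U0`, `Ũ0` of `Rep S`, `Rep S̃`:
`Rep S̃ ⊆ closure (Rep S)` iff `S_0 ⊆ S̃_0` and `S*_0 ⊆ S̃*_0`. In particular, the
irreducible components of `Rep_d(Λ)` are exactly the closures of those `Rep S` for which
the pair `(S_0, S*_0)` is minimal in the image of `x ↦ (Top M_x, soc M_x)` with respect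
to componentwise inclusion. -/
theorem statement_12 (K : Type) [Field K] [IsAlgClosed K]
    (Q : QuiverData) (d : Fin Q.n → ℕ)
    (Rels : Set (FreeAlgebra K (Fin Q.n ⊕ Fin Q.numArrows)))
    (hJ2 : ∀ x ∈ RepVar Q d K Rels, ∀ a b,
      (arrowMap Q d K x a) ∘ₗ (arrowMap Q d K x b) = 0) :
    (∀ (S Stilde : Fin 2 → Fin Q.n → ℕ), hasDimVec S d → hasDimVec Stilde d →
      ∀ (U0 U0' : Fin Q.n → ℕ),
      IsGenericSocle Q d K
        {x | x ∈ RepVar Q d K Rels ∧ radLayering Q d K 1 x = S} U0 →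
      IsGenericSocle Q d K
        {x | x ∈ RepVar Q d K Rels ∧ radLayering Q d K 1 x = Stilde} U0' →
      ({x : GenV Q d K Rels | radLayering Q d K 1 x.1 = Stilde} ⊆
          closure {x : GenV Q d K Rels | radLayering Q d K 1 x.1 = S}
        ↔ (S 0 ≤ Stilde 0 ∧ U0 ≤ U0'))) ∧
    ∀ C : Set (GenV Q d K Rels),
      C ∈ irreducibleComponents (GenV Q d K Rels) ↔
      ∃ (S : Fin 2 → Fin Q.n → ℕ) (U0 : Fin Q.n → ℕ), hasDimVec S d ∧
        IsGenericSocle Q d K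
          {x | x ∈ RepVar Q d K Rels ∧ radLayering Q d K 1 x = S} U0 ∧
        (∀ x ∈ RepVar Q d K Rels, topDim Q d K x ≤ S 0 → socDim Q d K x ≤ U0 →
          (topDim Q d K x = S 0 ∧ socDim Q d K x = U0)) ∧
        C = closure {x : GenV Q d K Rels | radLayering Q d K 1 x.1 = S} := by
  have : Infinite K := IsAlgClosed.instInfinite
  exact (statement_12_general K Q d Rels hJ2).imp_left fun h S Stilde _ _ => h S Stilde
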